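/- Fix a prime number p. Let k > 0 be an integer and let n_1, ..., n_{k-1} be positive integers. Choose an integer r > 0 such that p^r > n_1 + ... + n_{k-1}, and set n_k = p^r - (n_1 + ... + n_{k-1}). Then there exists a finite p-group G with irreducible complex characters Ψ, Θ ∈ Irr(G) such that ΨΘ = Σ_{i=1}^{k} n_i Φ_i, where Φ_1, ..., Φ_k are pairwise distinct irreducible characters of G and n_i = (ΨΘ, Φ_i) is the multiplicity of Φ_i in ΨΘ for each i. In particular, the product ΨΘ has exactly k distinct irreducible constituents. -/

import Mathlib

/-- `χ : G → ℂ` is a (complex) character of `G`: the trace function of some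
finite-dimensional complex representation of `G`. -/
def IsChar (G : Type*) [Group G] (χ : G → ℂ) : Prop :=
  ∃ (n : ℕ) (ρ : Representation ℂ G (Fin n → ℂ)),
    ∀ g : G, χ g = LinearMap.trace ℂ (Fin n → ℂ) (ρ g)

/-- The usual inner product of class functions on a finite group. -/
noncomputable def cInner (G : Type*) [Group G] [Finite G] (χ φ : G → ℂ) : ℂ :=
  (Nat.card G : ℂ)⁻¹ * ∑ᶠ g : G, χ g * (starRingEnd ℂ) (φ g)

/-- `χ` is an irreducible character of the finite group `G`. -/
def IsIrrChar (G : Type*) [Group G] [Finite G] (χ : G → ℂ) : Prop :=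
  IsChar G χ ∧ cInner G χ χ = 1

open scoped Classical in
/-- The induced character `χ^G` of a character `χ` of a subgroup `H ≤ G`. -/
noncomputable def inducedChar {G : Type*} [Group G] [Finite G]
    (H : Subgroup G) (χ : ↥H → ℂ) : G → ℂ :=
  fun g => (Nat.card H : ℂ)⁻¹ *
    ∑ᶠ x : G, if h : x⁻¹ * g * x ∈ H then χ ⟨x⁻¹ * g * x, h⟩ else 0

open scoped BigOperators

lemma isChar_of_matrix {G : Type*} [Group G] {ι : Type*} [Fintype ι] [DecidableEq ι]
    (M : G →* Matrix ι ι ℂ) : IsChar G (fun g => (M g).trace) := by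
  classical
  let e := Fintype.equivFin ι
  refine ⟨Fintype.card ι,
    ((Matrix.toLinAlgEquiv' (R := ℂ) (n := Fin (Fintype.card ι))).toAlgHom.toRingHom.toMonoidHom.comp
      ((Matrix.reindexAlgEquiv ℂ ℂ e).toAlgHom.toRingHom.toMonoidHom.comp M)), fun g => ?_⟩
  have : LinearMap.trace ℂ (Fin (Fintype.card ι) → ℂ)
      (Matrix.toLin' (Matrix.reindex e e (M g))) = (M g).trace := by
    rw [Matrix.trace_toLin'_eq]
    simp only [Matrix.trace, Matrix.diag, Matrix.reindex_apply, Matrix.submatrix_apply]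
    exact e.symm.sum_comp (fun i => M g i i)
  exact this.symm

lemma IsChar.exists_matrix {G : Type*} [Group G] {χ : G → ℂ} (h : IsChar G χ) :
    ∃ (n : ℕ) (M : G →* Matrix (Fin n) (Fin n) ℂ), ∀ g, χ g = (M g).trace := by
  obtain ⟨n, ρ, h⟩ := h
  refine ⟨n, (LinearMap.toMatrixAlgEquiv' (R := ℂ) (n := Fin n)).toAlgHom.toRingHom.toMonoidHom.comp ρ,
    fun g => ?_⟩
  rw [h g]
  have : LinearMap.trace ℂ (Fin n → ℂ) (ρ g) = (LinearMap.toMatrix' (ρ g)).trace := by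
    rw [← Matrix.trace_toLin'_eq, Matrix.toLin'_toMatrix']
  exact this

lemma isChar_of_hom {G : Type*} [Group G] (f : G →* ℂ) : IsChar G f := by
  have := isChar_of_matrix (ι := Unit) ((Matrix.scalar Unit (α := ℂ)).toMonoidHom.comp f)
  convert this using 2 with g
  simp [Matrix.trace]

lemma isChar_pi {Y : Type*} [Fintype Y] [DecidableEq Y] {E : Type*} [Group E] (χ : Y → E → ℂ)
    (h : ∀ y, IsChar E (χ y)) : IsChar (Y → E) (fun b => ∏ y, χ y (b y)) := by
  classical
  choose n M hM using fun y => (h y).exists_matrix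
  let R : (Y → E) →* Matrix (∀ y, Fin (n y)) (∀ y, Fin (n y)) ℂ :=
    { toFun := fun b => Matrix.of fun u v => ∏ y, M y (b y) (u y) (v y)
      map_one' := by
        ext u v
        simp only [Pi.one_apply, map_one, Matrix.of_apply, Matrix.one_apply]
        by_cases huv : u = v
        · simp [huv]
        · rw [if_neg huv]
          obtain ⟨y, hy⟩ := Function.ne_iff.mp huv
          exact Finset.prod_eq_zero (Finset.mem_univ y) (by simp [hy])
      map_mul' := fun b b' => by
        ext u v
        simp only [Pi.mul_apply, map_mul, Matrix.of_apply, Matrix.mul_apply]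
        rw [Finset.prod_univ_sum]
        simp [Finset.prod_mul_distrib, Fintype.piFinset_univ] }
  convert isChar_of_matrix R using 2 with b
  simp only [hM, Matrix.trace, Matrix.diag]
  rw [Finset.prod_univ_sum]
  simp [R, Fintype.piFinset_univ]

lemma cInner_eq {G : Type*} [Group G] [Fintype G] (χ φ : G → ℂ) :
    cInner G χ φ = (Fintype.card G : ℂ)⁻¹ * ∑ g : G, χ g * (starRingEnd ℂ) (φ g) := by
  rw [cInner, finsum_eq_sum_of_fintype, Nat.card_eq_fintype_card]

lemma cInner_conj {G : Type*} [Group G] [Finite G] (χ φ : G → ℂ) :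
    cInner G χ φ = starRingEnd ℂ (cInner G φ χ) := by
  have := Fintype.ofFinite G
  simp only [cInner_eq, map_mul, map_inv₀, map_natCast, map_sum, Complex.conj_conj]
  simp only [mul_comm]

lemma cInner_pi {Y : Type*} [Fintype Y] [DecidableEq Y] {E : Type*} [Group E] [Finite E]
    (χ φ : Y → E → ℂ) :
    cInner (Y → E) (fun b => ∏ y, χ y (b y)) (fun b => ∏ y, φ y (b y))
      = ∏ y, cInner E (χ y) (φ y) := by
  classical
  have := Fintype.ofFinite E
  simp only [cInner_eq, map_prod, ← Finset.prod_mul_distrib]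
  rw [Finset.prod_mul_distrib, Finset.prod_univ_sum]
  simp [Fintype.piFinset_univ]

lemma cInner_sum_left {G : Type*} [Group G] [Finite G] {ι : Type*} (s : Finset ι) (c : ι → ℂ)
    (χ : ι → G → ℂ) (φ : G → ℂ) :
    cInner G (fun g => ∑ i ∈ s, c i * χ i g) φ = ∑ i ∈ s, c i * cInner G (χ i) φ := by
  have := Fintype.ofFinite G
  simp only [cInner_eq, Finset.sum_mul, Finset.mul_sum]
  rw [Finset.sum_comm]
  refine Finset.sum_congr rfl fun i _ => Finset.sum_congr rfl fun g _ => by ring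

section Ind
variable {B P : Type*} [Group B] [Group P] [Fintype P] [DecidableEq P] (φ : P →* MulAut B)

/-- character induced from the normal subgroup `B` of `B ⋊ P` -/
def indF (f : B → ℂ) (g : B ⋊[φ] P) : ℂ :=
  if g.right = 1 then ∑ x : P, f (φ x⁻¹ g.left) else 0

lemma isChar_indF {f : B → ℂ} (hf : IsChar B f) : IsChar (B ⋊[φ] P) (indF φ f) := by
  obtain ⟨n, M, hM⟩ := hf.exists_matrix
  let R : (B ⋊[φ] P) →* Matrix (P × Fin n) (P × Fin n) ℂ :=
    { toFun := fun g => Matrix.of fun u v =>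
        if u.1 = g.right * v.1 then M (φ u.1⁻¹ g.left) u.2 v.2 else 0
      map_one' := by
        ext u v
        simp [Matrix.one_apply, Prod.ext_iff, ite_and]
      map_mul' := fun g g' => by
        ext u v
        simp only [SemidirectProduct.mul_left, SemidirectProduct.mul_right, Matrix.of_apply,
          Matrix.mul_apply, Fintype.sum_prod_type]
        rw [Finset.sum_eq_single (g'.right * v.1)]
        · by_cases h : u.1 = g.right * g'.right * v.1
          · have h2 : u.1 = g.right * (g'.right * v.1) := by rw [h, mul_assoc]
            simp only [if_pos h, if_pos h2, if_true]
            rw [← Matrix.mul_apply, ← map_mul]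
            rw [map_mul, h2, ← MulAut.mul_apply, ← map_mul]
            simp
          · have h2 : ¬ u.1 = g.right * (g'.right * v.1) := by rwa [← mul_assoc]
            simp [if_neg h, if_neg h2]
        · intro x _ hx
          simp [hx]
        · simp }
  convert isChar_of_matrix R using 2 with g
  simp only [indF, R, Matrix.trace, Matrix.diag, MonoidHom.coe_mk, OneHom.coe_mk, Matrix.of_apply,
    Fintype.sum_prod_type, hM]
  by_cases h : g.right = 1
  · simp [h]
  · have : ∀ x : P, x ≠ g.right * x := fun x hx => h (by simpa using hx.symm)
    simp [h, this]

lemma indF_mul (f f' : B → ℂ) (g : B ⋊[φ] P) :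
    indF φ f g * indF φ f' g = ∑ x : P, indF φ (fun b => f b * f' (φ x b)) g := by
  by_cases h : g.right = 1
  · simp only [indF, if_pos h]
    rw [Finset.sum_comm, Finset.sum_mul]
    refine Finset.sum_congr rfl fun x _ => ?_
    rw [← Finset.mul_sum]
    congr 1
    have : ∀ z : P, φ z (φ x⁻¹ g.left) = φ ((x * z⁻¹)⁻¹) g.left := fun z => by
      rw [← MulAut.mul_apply, ← map_mul]; simp
    simp only [this]
    exact (((Equiv.inv P).trans (Equiv.mulLeft x)).sum_comp (fun w => f' (φ w⁻¹ g.left))).symm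
  · simp [indF, h]

instance instFiniteSD [Finite B] : Finite (B ⋊[φ] P) :=
  Finite.of_equiv _ SemidirectProduct.equivProd.symm

lemma sum_sd [Fintype B] [Fintype (B ⋊[φ] P)] (F : B ⋊[φ] P → ℂ) :
    ∑ g, F g = ∑ t : P, ∑ b : B, F ⟨b, t⟩ := by
  rw [← SemidirectProduct.equivProd.symm.sum_comp F, Fintype.sum_prod_type_right]
  rfl

lemma card_sd [Fintype B] [Fintype (B ⋊[φ] P)] :
    (Fintype.card (B ⋊[φ] P) : ℂ) = Fintype.card B * Fintype.card P := by
  have := SemidirectProduct.card (φ := φ)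
  simp only [Nat.card_eq_fintype_card] at this
  exact_mod_cast this

lemma cInner_indF [Finite B] (f f' : B → ℂ) :
    cInner (B ⋊[φ] P) (indF φ f) (indF φ f') = ∑ x : P, cInner B f (fun b => f' (φ x b)) := by
  have := Fintype.ofFinite B
  have := Fintype.ofFinite (B ⋊[φ] P)
  have hP : (Fintype.card P : ℂ) ≠ 0 := by simp
  simp only [cInner_eq]
  rw [sum_sd, Finset.sum_eq_single 1 _ (by simp), card_sd, ← Finset.mul_sum, Finset.sum_comm,
    mul_inv, mul_assoc]
  · congr 1
    rw [inv_mul_eq_iff_eq_mul₀ hP]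
    simp only [indF, if_true, Finset.sum_mul]
    rw [Finset.sum_comm]
    have key : ∀ x : P, ∑ b : B, f (φ x⁻¹ b) * (starRingEnd ℂ) (∑ z : P, f' (φ z⁻¹ b))
        = ∑ b : B, ∑ z : P, f b * (starRingEnd ℂ) (f' (φ z b)) := fun x => by
      rw [← (φ x).toEquiv.sum_comp]
      refine Finset.sum_congr rfl fun b _ => ?_
      simp only [MulEquiv.toEquiv_eq_coe, EquivLike.coe_coe, ← MulAut.mul_apply, ← map_mul,
        inv_mul_cancel, map_one, MulAut.one_apply, map_sum, Finset.mul_sum]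
      exact (((Equiv.inv P).trans (Equiv.mulRight x)).sum_comp
        (fun w => f b * (starRingEnd ℂ) (f' (φ w b))))
    rw [Finset.sum_congr rfl fun x _ => key x]
    simp
  · intro t _ ht
    simp [indF, ht]
end Ind

section Heis
variable (q : ℕ) [NeZero q]

/-- the action defining the Heisenberg group over `ZMod q` -/
def heisAct : Multiplicative (ZMod q) →* MulAut (Multiplicative (ZMod q × ZMod q)) where
  toFun x :=
    { toFun := fun v => .ofAdd (v.toAdd.1, v.toAdd.2 + x.toAdd * v.toAdd.1)
      invFun := fun v => .ofAdd (v.toAdd.1, v.toAdd.2 - x.toAdd * v.toAdd.1)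
      left_inv := fun v => by
        apply Multiplicative.toAdd.injective
        ext <;> simp
      right_inv := fun v => by
        apply Multiplicative.toAdd.injective
        ext <;> simp
      map_mul' := fun v w => by
        apply Multiplicative.toAdd.injective
        ext
        · simp
        · simp; ring }
  map_one' := by
    refine MulEquiv.ext fun v => Multiplicative.toAdd.injective ?_
    ext <;> simp
  map_mul' x y := by
    refine MulEquiv.ext fun v => Multiplicative.toAdd.injective ?_
    ext
    · simp
    · simp; ring

/-- the Heisenberg group over `ZMod q` -/
abbrev Heis := Multiplicative (ZMod q × ZMod q) ⋊[heisAct q] Multiplicative (ZMod q)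

/-- the inducing linear character -/
noncomputable def lam (v : Multiplicative (ZMod q × ZMod q)) : ℂ := ZMod.stdAddChar v.toAdd.2

lemma isChar_lam : IsChar _ (lam q) :=
  isChar_of_hom
    { toFun := lam q
      map_one' := by simp [lam]
      map_mul' := fun v w => by simp [lam, AddChar.map_add_eq_mul] }

/-- linear characters of the Heisenberg group -/
noncomputable def nu (a : ZMod q) (g : Heis q) : ℂ := ZMod.stdAddChar (g.right.toAdd * a)

lemma isChar_nu (a : ZMod q) : IsChar _ (nu q a) :=
  isChar_of_hom
    { toFun := nu q a
      map_one' := by simp [nu]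
      map_mul' := fun v w => by simp [nu, add_mul, AddChar.map_add_eq_mul] }

/-- irreducible characters of the Heisenberg group; `none` is the fully ramified one -/
noncomputable def hch : Option (ZMod q) → Heis q → ℂ
  | none => indF (heisAct q) (lam q)
  | some a => nu q a

lemma isChar_hch (i : Option (ZMod q)) : IsChar _ (hch q i) := by
  cases i with
  | none => exact isChar_indF _ (isChar_lam q)
  | some a => exact isChar_nu q a

lemma hch_none_mul (a : ZMod q) (g : Heis q) : hch q none g * hch q (some a) g = hch q none g := by
  by_cases h : g.right = 1
  · simp [hch, nu, h]
  · simp [hch, indF, h]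

lemma hch_zero_mul (a : ZMod q) (g : Heis q) :
    hch q (some 0) g * hch q (some a) g = hch q (some a) g := by
  simp [hch, nu]

lemma sum_std (b : ZMod q) : ∑ x : ZMod q, (ZMod.stdAddChar (x * b) : ℂ)
    = if b = 0 then (q : ℂ) else 0 := by
  rw [AddChar.sum_mulShift b (ZMod.isPrimitive_stdAddChar q)]
  simp

lemma cInner_nu (a b : ZMod q) : cInner (Heis q) (nu q a) (nu q b) = if a = b then 1 else 0 := by
  have := Fintype.ofFinite (Heis q)
  have hq : (q : ℂ) ≠ 0 := NeZero.ne _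
  rw [cInner_eq, sum_sd, card_sd]
  have : ∀ t : Multiplicative (ZMod q), ∀ v : Multiplicative (ZMod q × ZMod q),
      nu q a ⟨v, t⟩ * (starRingEnd ℂ) (nu q b ⟨v, t⟩) = ZMod.stdAddChar (t.toAdd * (a - b)) := by
    intro t v
    simp only [nu, ← AddChar.map_neg_eq_conj, ← AddChar.map_add_eq_mul]
    congr 1; ring
  simp only [this]
  have h2 : ∑ t : Multiplicative (ZMod q), (ZMod.stdAddChar (t.toAdd * (a - b)) : ℂ)
      = if a - b = 0 then (q : ℂ) else 0 :=
    ((Multiplicative.toAdd (α := ZMod q)).sum_comp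
      (fun t => (ZMod.stdAddChar (t * (a - b)) : ℂ))).trans (sum_std q (a - b))
  simp only [Finset.sum_const, nsmul_eq_mul, ← Finset.mul_sum, h2, sub_eq_zero]
  split_ifs <;> simp [hq, ZMod.card]
  field_simp

lemma sum_lam [Fact (1 < q)] : ∑ v, lam q v = 0 := by
  have : ∑ v : ZMod q × ZMod q, (ZMod.stdAddChar (v.2) : ℂ) = 0 := by
    rw [Fintype.sum_prod_type]
    have := sum_std q 1
    simp at this
    simp [this]
  exact ((Multiplicative.toAdd (α := ZMod q × ZMod q)).sum_comp
    (fun v => (ZMod.stdAddChar v.2 : ℂ))).trans this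

lemma cInner_none_nu [Fact (1 < q)] (a : ZMod q) :
    cInner (Heis q) (hch q none) (nu q a) = 0 := by
  have := Fintype.ofFinite (Heis q)
  rw [cInner_eq, sum_sd, Finset.sum_eq_single 1 _ (by simp)]
  · simp only [hch, indF, nu]
    simp only [if_true, toAdd_one, zero_mul, AddChar.map_zero_eq_one, map_one, mul_one]
    rw [Finset.sum_comm]
    rw [Finset.sum_eq_zero, mul_zero]
    intro x _
    exact ((heisAct q x⁻¹).toEquiv.sum_comp (lam q)).trans (sum_lam q)
  · intro t _ ht
    simp [hch, indF, ht]

lemma cInner_none_none : cInner (Heis q) (hch q none) (hch q none) = 1 := by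
  have hq : (q : ℂ) ≠ 0 := NeZero.ne _
  simp only [hch]
  rw [cInner_indF]
  have : ∀ x : Multiplicative (ZMod q),
      cInner (Multiplicative (ZMod q × ZMod q)) (lam q) (fun b => lam q (heisAct q x b))
        = if x = 1 then 1 else 0 := by
    intro x
    rw [cInner_eq]
    have h1 : ∀ v, lam q v * (starRingEnd ℂ) (lam q (heisAct q x v))
        = ZMod.stdAddChar (v.toAdd.1 * (- x.toAdd)) := by
      intro v
      simp only [lam, ← AddChar.map_neg_eq_conj, ← AddChar.map_add_eq_mul]
      congr 1
      simp [heisAct]; ring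
    simp only [h1]
    have h2 : ∑ v : ZMod q × ZMod q, (ZMod.stdAddChar (v.1 * (- x.toAdd)) : ℂ)
        = if x = 1 then (q : ℂ) * q else 0 := by
      rw [Fintype.sum_prod_type]
      simp only [Finset.sum_const, nsmul_eq_mul, ← Finset.mul_sum, sum_std]
      simp
    have h3 : (Fintype.card (Multiplicative (ZMod q × ZMod q)) : ℂ) = q * q := by
      simp [ZMod.card]
    rw [h3]
    refine (congrArg _ (((Multiplicative.toAdd (α := ZMod q × ZMod q)).sum_comp
      (fun v => (ZMod.stdAddChar (v.1 * (- x.toAdd)) : ℂ))).trans h2)).trans ?_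
    split_ifs
    · field_simp
    · simp
  simp [this]

lemma cInner_hch [Fact (1 < q)] (i j : Option (ZMod q)) :
    cInner (Heis q) (hch q i) (hch q j) = if i = j then 1 else 0 := by
  rcases i with _ | a <;> rcases j with _ | b
  · simp [cInner_none_none]
  · simpa [hch] using cInner_none_nu q b
  · rw [cInner_conj]; simpa [hch] using cInner_none_nu q a
  · simpa [hch] using cInner_nu q a b

end Heis

section Wreath
variable (P E : Type*) [Group P] [Group E] [Fintype P] [DecidableEq P]

/-- permutation action of `P` on two copies of the regular base group -/
def wAct : P →* MulAut (P × Bool → E) where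
  toFun x :=
    { toFun := fun b y => b (x⁻¹ * y.1, y.2)
      invFun := fun b y => b (x * y.1, y.2)
      left_inv := fun b => by ext y; simp
      right_inv := fun b => by ext y; simp
      map_mul' := fun b b' => rfl }
  map_one' := by ext b y; simp
  map_mul' x y := by ext b z; simp [mul_assoc]

variable {P E}

/-- product character of the base group -/
noncomputable def wF (χ : P × Bool → E → ℂ) (b : P × Bool → E) : ℂ := ∏ y, χ y (b y)

lemma wF_act (χ : P × Bool → E → ℂ) (x : P) (b : P × Bool → E) :
    wF χ (wAct P E x b) = wF (fun y => χ (x * y.1, y.2)) b := by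
  unfold wF
  rw [← ((Equiv.mulLeft x).prodCongr (Equiv.refl Bool)).prod_comp]
  simp [wAct, Prod.map]

lemma cInner_w [Finite E] (χ χ' : P × Bool → E → ℂ) :
    cInner _ (indF (wAct P E) (wF χ)) (indF (wAct P E) (wF χ'))
      = ∑ x : P, ∏ y : P × Bool, cInner E (χ y) (χ' (x * y.1, y.2)) := by
  rw [cInner_indF]
  refine Finset.sum_congr rfl fun x _ => ?_
  simp only [wF_act]
  exact cInner_pi χ (fun y => χ' (x * y.1, y.2))

lemma isChar_w (χ : P × Bool → E → ℂ) (h : ∀ y, IsChar E (χ y)) :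
    IsChar _ (indF (wAct P E) (wF χ)) :=
  isChar_indF _ (isChar_pi χ h)

lemma mul_w (χ χ' : P × Bool → E → ℂ) (g) :
    indF (wAct P E) (wF χ) g * indF (wAct P E) (wF χ') g
      = ∑ x : P, indF (wAct P E) (wF fun y e => χ y e * χ' (x * y.1, y.2) e) g := by
  rw [indF_mul]
  refine Finset.sum_congr rfl fun x _ => ?_
  congr 1
  ext b
  rw [wF_act]
  simp [wF, Finset.prod_mul_distrib]
end Wreath

section Main
variable (q : ℕ) [NeZero q] (P : Type*) [Group P] [Fintype P] [DecidableEq P]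

/-- labels for the characters `Φ` -/
def labF (a : ZMod q) (y : P × Bool) : Option (ZMod q) := if y = (1, false) then some a else none

/-- labels for the character `Θ` -/
def labT (c : P → ZMod q) (y : P × Bool) : ZMod q :=
  if y.2 = false then c y.1 else if y.1 = 1 then 1 else 0

/-- induced character with given labels -/
noncomputable def wch (l : P × Bool → Option (ZMod q)) :
    ((P × Bool → Heis q) ⋊[wAct P (Heis q)] P) → ℂ :=
  indF (wAct P (Heis q)) (wF fun y => hch q (l y))

lemma cInner_wch [Fact (1 < q)] (l l' : P × Bool → Option (ZMod q))
    (h : ∀ x : P, x ≠ 1 → ∃ y : P × Bool, l y ≠ l' (x * y.1, y.2)) :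
    cInner _ (wch q P l) (wch q P l') = if l = l' then 1 else 0 := by
  unfold wch
  rw [cInner_w, Finset.sum_eq_single 1 _ (by simp)]
  · simp only [one_mul, cInner_hch]
    split_ifs with hl
    · simp [hl]
    · obtain ⟨y, hy⟩ := Function.ne_iff.mp hl
      exact Finset.prod_eq_zero (Finset.mem_univ y) (by simp [hy])
  · intro x _ hx
    obtain ⟨y, hy⟩ := h x hx
    exact Finset.prod_eq_zero (Finset.mem_univ y) (by rw [cInner_hch, if_neg hy])

lemma cInner_labF [Fact (1 < q)] (a b : ZMod q) :
    cInner _ (wch q P (labF q P a)) (wch q P (labF q P b)) = if a = b then 1 else 0 := by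
  rw [cInner_wch]
  · congr 1
    rw [eq_iff_iff]
    refine ⟨fun h => ?_, fun h => by rw [h]⟩
    simpa [labF] using congrFun h (1, false)
  · intro x hx
    refine ⟨(1, false), ?_⟩
    simp [labF, hx]

lemma cInner_labT [Fact (1 < q)] (c : P → ZMod q) :
    cInner _ (wch q P (fun y => some (labT q P c y))) (wch q P (fun y => some (labT q P c y)))
      = 1 := by
  rw [cInner_wch]
  · simp
  · intro x hx
    refine ⟨(1, true), ?_⟩
    simp [labT, hx]

lemma wch_mul (c : P → ZMod q) (g) :
    wch q P (labF q P 0) g * wch q P (fun y => some (labT q P c y)) g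
      = ∑ x : P, wch q P (labF q P (c x)) g := by
  unfold wch
  rw [mul_w]
  refine Finset.sum_congr rfl fun x _ => ?_
  congr 2
  ext y e
  by_cases hy : y = (1, false)
  · subst hy
    simp [labF, labT, hch_zero_mul]
  · simp [labF, hy, hch_none_mul]

lemma isChar_wch (l) : IsChar _ (wch q P l) := isChar_w _ fun y => isChar_hch q (l y)

end Main

/-- **Theorem A.** Fix a prime `p`. Let `k > 0` and let `n 0, …, n (k-2)` (the
multiplicities `n_1, …, n_{k-1}`) be positive integers.  Choose `r > 0` with
`p ^ r > n_1 + ⋯ + n_{k-1}` and let `m : Fin k → ℕ` be the full list of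
multiplicities, i.e. `m i = n i` for `i < k - 1` and the last one is
`n_k = p ^ r - (n_1 + ⋯ + n_{k-1})`.  Then there is a finite `p`-group `G`
with irreducible characters `Ψ, Θ` such that `Ψ Θ = ∑ i, m i • Φ i` for
pairwise distinct irreducible characters `Φ i` of `G`, with
`m i = (Ψ Θ, Φ i)`; in particular `Ψ Θ` has exactly `k` distinct irreducible
constituents. -/
theorem product_with_prescribed_constituents
    (p : ℕ) (hp : p.Prime) (k : ℕ) (hk : 0 < k)
    (n : Fin (k - 1) → ℕ) (hn : ∀ i, 0 < n i)
    (r : ℕ) (hr : 0 < r) (hlt : ∑ i, n i < p ^ r)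
    (m : Fin k → ℕ)
    (hm : ∀ (i : Fin k) (h : (i : ℕ) < k - 1), m i = n ⟨i, h⟩)
    (hmk : m ⟨k - 1, Nat.sub_lt hk Nat.one_pos⟩ = p ^ r - ∑ i, n i) :
    ∃ (G : Type) (_ : Group G) (_ : Finite G), IsPGroup p G ∧
      ∃ (Ψ Θ : G → ℂ) (Φ : Fin k → (G → ℂ)),
        IsIrrChar G Ψ ∧ IsIrrChar G Θ ∧
        (∀ i, IsIrrChar G (Φ i)) ∧ Function.Injective Φ ∧
        (∀ g : G, Ψ g * Θ g = ∑ i : Fin k, (m i : ℂ) * Φ i g) ∧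
        (∀ i : Fin k, cInner G (fun g => Ψ g * Θ g) (Φ i) = (m i : ℂ)) := by

  have : Fact p.Prime := ⟨hp⟩
  have hmpos : ∀ i, 0 < m i := by
    intro i
    by_cases h : (i : ℕ) < k - 1
    · rw [hm i h]; exact hn _
    · have : i = ⟨k - 1, Nat.sub_lt hk Nat.one_pos⟩ := by
        ext; have := i.2; simp; omega
      rw [this, hmk]; omega
  have hsum : ∑ i, m i = p ^ r := by
    obtain ⟨k, rfl⟩ : ∃ l, k = l + 1 := ⟨k - 1, by omega⟩
    rw [Fin.sum_univ_castSucc]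
    have h1 : ∀ i : Fin k, m i.castSucc = n i := fun i => hm i.castSucc i.2
    have h2 : m (Fin.last k) = p ^ r - ∑ i, n i := hmk
    simp only [h1]
    rw [h2]
    exact Nat.add_sub_cancel' hlt.le
  have hkq : k ≤ p ^ r := by
    rw [← hsum]
    calc k = ∑ i : Fin k, 1 := by simp
      _ ≤ _ := Finset.sum_le_sum fun i _ => hmpos i
  have hq1 : 1 < p ^ r := Nat.one_lt_pow hr.ne' hp.one_lt
  have : Fact (1 < p ^ r) := ⟨hq1⟩
  have : NeZero (p ^ r) := ⟨by omega⟩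
  let P := Multiplicative (ZMod (p ^ r))
  have hcP : Fintype.card P = p ^ r := by simp [P, ZMod.card]
  let e : P ≃ Σ i : Fin k, Fin (m i) :=
    (Fintype.equivFinOfCardEq (hcP.trans hsum.symm)).trans finSigmaFinEquiv.symm
  let ι : Fin k → ZMod (p ^ r) := fun i => ((i : ℕ) : ZMod (p ^ r))
  have hι : Function.Injective ι := by
    intro i j h
    have h := (ZMod.natCast_eq_natCast_iff' _ _ _).mp h
    rw [Nat.mod_eq_of_lt (i.2.trans_le hkq), Nat.mod_eq_of_lt (j.2.trans_le hkq)] at h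
    exact Fin.ext h
  let c : P → ZMod (p ^ r) := fun x => ι (e x).1
  have horth : ∀ i j, cInner _ (wch (p ^ r) P (labF _ P (ι i))) (wch (p ^ r) P (labF _ P (ι j)))
      = if i = j then 1 else 0 := fun i j => by
    rw [cInner_labF]; simp [hι.eq_iff]
  have hprod : ∀ g, wch (p ^ r) P (labF _ P 0) g * wch (p ^ r) P (fun y => some (labT _ P c y)) g
      = ∑ i : Fin k, (m i : ℂ) * wch (p ^ r) P (labF _ P (ι i)) g := by
    intro g
    rw [wch_mul]
    simp only [c]
    rw [e.sum_comp (fun s => wch (p ^ r) P (labF _ P (ι s.1)) g), Fintype.sum_sigma]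
    simp
  refine ⟨(P × Bool → Heis (p ^ r)) ⋊[wAct P (Heis (p ^ r))] P, inferInstance, inferInstance, ?_,
    wch _ P (labF _ P 0), wch _ P (fun y => some (labT _ P c y)),
    fun i => wch _ P (labF _ P (ι i)), ⟨isChar_wch _ _ _, ?_⟩, ⟨isChar_wch _ _ _, ?_⟩,
    fun i => ⟨isChar_wch _ _ _, ?_⟩, ?_, hprod, ?_⟩
  · have h1 : Nat.card P = p ^ r := by rw [Nat.card_eq_fintype_card, hcP]
    have h2 : Nat.card (Heis (p ^ r)) = p ^ (r * 3) := by
      rw [SemidirectProduct.card]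
      have h3 : Nat.card (Multiplicative (ZMod (p ^ r) × ZMod (p ^ r))) = p ^ r * p ^ r := by
        rw [Nat.card_congr Multiplicative.toAdd, Nat.card_prod, Nat.card_zmod]
      rw [h3]
      refine (congrArg _ h1).trans ?_
      ring
    refine IsPGroup.of_card (n := r * 3 * (Nat.card (P × Bool)) + r) ?_
    rw [SemidirectProduct.card, Nat.card_fun, h1, h2]
    ring
  · rw [cInner_labF]; simp
  · rw [cInner_labT]
  · rw [horth]; simp
  · intro i j hij
    by_contra hne
    have h1 := horth i j
    simp only at hij
    rw [← hij, horth] at h1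
    simp [hne] at h1
  · intro i
    simp only [hprod]
    rw [cInner_sum_left]
    simp [horth]
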